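/- Let G be a finite simple graph on vertex set {v_1,…,v_n} in which every vertex has even degree, let ε assign a sign ε_e ∈ {+1, −1} to each edge e of G, and define the generalized graph polynomial Q(x) = ∏_{e=(i,j)∈E}(x_i + ε_e x_j) ∈ ℝ[x_1,…,x_n]. Suppose Q has a nonzero almost central coefficient: there is ξ with [x^ξ]Q ≠ 0 and |ξ_i − deg_G(v_i)/2| ≤ 1 for all i. Then for every integer k ≥ 1, the polynomial ∏_{i=1}^{2k} Q(x^i) · ∏_{i=1}^{2k} ∏_{j=1}^n (x^i_j − x^{i+1}_j) in the 2kn variables x^i_j (with x^{2k+1} ≡ x^1) has nonzero central coefficient: the coefficient of ∏_{i=1}^{2k} ∏_{j=1}^n (x^i_j)^{deg_G(v_j)/2 + 1} is nonzero. -/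

import Mathlib

/-!
For vertex sets `S`, `T` let `A S T` be the coefficient of `Q` at `deg / 2 + 1_S - 1_T`. In each
coupling factor `x^i_v - x^{i+1}_v` one of the two terms is chosen; recording as a set `S_i` the
vertices at which `x^i_v` is chosen, the central coefficient becomes
`∑ ∏_i (-1)^{|V \ S_i|} A S_i S_{i+1}`, a sum over closed walks `S_1, …, S_{2k}` of vertex sets
(`coeff_eq_sum`).

Since `Q` is homogeneous of degree `|E|`, `A S T ≠ 0` forces `|S| = |T|`, so on a contributing
walk all signs agree, and there are `2k` of them; hence they cancel and the sum is `tr (A ^ (2k))`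
(`sum_cycles`). Exchanging the endpoint chosen on every edge shows that `Aᵀ = (∏ ε_e) A`
(`transfer_transpose`), so `A` is symmetric or antisymmetric, and `tr (A ^ (2k))` is up to sign the
squared Frobenius norm of `A ^ k`. A normal matrix is not nilpotent unless it is zero, and `A` is
nonzero because every almost central coefficient of `Q` is an entry of `A`
(`trace_pow_ne_zero`).
-/


open MvPolynomial Finset

/-- An orientation of a simple graph: a finite set of ordered pairs containing,
for each edge `{u, v}` of `G`, exactly one of `(u, v)` and `(v, u)`. -/
structure GraphOrientation {V : Type*} (G : SimpleGraph V) where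
  edges : Finset (V × V)
  adj_of_mem : ∀ e ∈ edges, G.Adj e.1 e.2
  mem_iff_not_swap_mem : ∀ u v : V, G.Adj u v → ((u, v) ∈ edges ↔ (v, u) ∉ edges)

/-- The graph polynomial `∏_{(i,j) ∈ E} (x_j - x_i)` associated to an orientation. -/
noncomputable def graphPoly {V : Type*} {G : SimpleGraph V} (D : GraphOrientation G) :
    MvPolynomial V ℝ :=
  ∏ e ∈ D.edges, (X e.2 - X e.1)

/-- The outdegree of a vertex in an orientation. -/
def GraphOrientation.outDeg {V : Type*} [DecidableEq V] {G : SimpleGraph V}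
    (D : GraphOrientation G) (v : V) : ℕ :=
  (D.edges.filter fun e => e.1 = v).card

/-- `G` is `f`-choosable: any assignment of lists of real colors with `|A_v| ≥ f v`
admits a proper coloring from the lists. -/
def Choosable {V : Type*} (G : SimpleGraph V) (f : V → ℕ) : Prop :=
  ∀ A : V → Finset ℝ, (∀ v, f v ≤ (A v).card) →
    ∃ c : V → ℝ, (∀ v, c v ∈ A v) ∧ ∀ u v : V, G.Adj u v → c u ≠ c v

/-- The list chromatic number. -/
noncomputable def chNumber {V : Type*} (G : SimpleGraph V) : ℕ :=
  sInf {m | Choosable G fun _ => m}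

/-- The Alon–Tarsi number: the least `k` such that the graph polynomial has a
monomial `x^d` with nonzero coefficient and `max_v d_v = k - 1`. -/
noncomputable def ATNumber {V : Type*} (G : SimpleGraph V) : ℕ :=
  sInf {k | ∃ (D : GraphOrientation G) (d : V →₀ ℕ),
    MvPolynomial.coeff d (graphPoly D) ≠ 0 ∧ d.support.sup d + 1 = k}

instance {α β : Type*} {G : SimpleGraph α} {H : SimpleGraph β}
    [DecidableEq α] [DecidableEq β] [DecidableRel G.Adj] [DecidableRel H.Adj] :
    DecidableRel (G.boxProd H).Adj :=
  fun _ _ => decidable_of_iff _ SimpleGraph.boxProd_adj.symm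

namespace CentralCoeff

/-! ### Coefficients of products in disjoint sets of variables -/

/-- Coefficients of a product of polynomials in pairwise disjoint sets of variables multiply. -/
lemma coeff_prod_rename {I V : Type*} [Fintype I] [DecidableEq I] [Fintype V] [DecidableEq V]
    (F : I → MvPolynomial V ℝ) (m : I × V →₀ ℕ) :
    coeff m (∏ i, rename (fun v => (i, v)) (F i)) =
      ∏ i, coeff (Finsupp.equivFunOnFinite.symm fun v => m (i, v)) (F i) := by
  have hF : ∀ i, rename (fun v => (i, v)) (F i) =
      ∑ u ∈ (F i).support, monomial (Finsupp.mapDomain (fun v => (i, v)) u) (coeff u (F i)) := by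
    intro i
    conv_lhs => rw [(F i).as_sum]
    rw [map_sum]
    simp only [rename_monomial]
  have hval : ∀ (p : I → V →₀ ℕ) (i : I) (v : V),
      (∑ j, Finsupp.mapDomain (fun v => (j, v)) (p j)) (i, v) = p i v := by
    intro p i v
    rw [Finsupp.finsetSum_apply, Finset.sum_eq_single i]
    · exact Finsupp.mapDomain_apply (fun a b h => by simpa using h) _ _
    · intro j _ hj
      apply Finsupp.mapDomain_of_notMem_range
      rintro ⟨w, hw⟩
      exact hj (by simpa using congrArg Prod.fst hw)
    · simp
  have heq : ∀ p : I → V →₀ ℕ, (∑ j, Finsupp.mapDomain (fun v => (j, v)) (p j)) = m ↔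
      p = fun i => Finsupp.equivFunOnFinite.symm fun v => m (i, v) := by
    intro p
    constructor
    · rintro rfl
      ext i v
      simp only [hval, Finsupp.equivFunOnFinite_symm_apply_apply]
    · rintro rfl
      ext ⟨i, v⟩
      rw [hval]
      simp
  simp_rw [hF]
  rw [Finset.prod_univ_sum, coeff_sum]
  simp_rw [← MvPolynomial.monomial_sum_prod, coeff_monomial, heq]
  rw [Finset.sum_ite_eq']
  split_ifs with h
  · rfl
  · simp only [Fintype.mem_piFinset, not_forall, notMem_support_iff] at h
    obtain ⟨i, hi⟩ := h
    exact (Finset.prod_eq_zero (Finset.mem_univ i) hi).symm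

/-! ### Traces of powers -/

/-- Sums over walks with `m` steps, weighted by a function of the endpoints, are given by the
entries of `A ^ m`. -/
lemma sum_paths {ι : Type*} [Fintype ι] [DecidableEq ι] (A : Matrix ι ι ℝ) (m : ℕ) :
    ∀ F : ι → ι → ℝ,
    ∑ p : Fin (m + 1) → ι, (∏ i : Fin m, A (p i.castSucc) (p i.succ)) * F (p 0) (p (Fin.last m))
      = ∑ a, ∑ b, (A ^ m) a b * F a b := by
  induction m with
  | zero =>
    intro F
    rw [← (Equiv.funUnique (Fin 1) ι).symm.sum_comp]
    simp [Matrix.one_apply]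
  | succ m ih =>
    intro F
    rw [← (Fin.consEquiv fun _ : Fin (m + 2) => ι).sum_comp, Fintype.sum_prod_type]
    refine Finset.sum_congr rfl fun a _ => ?_
    have h := ih (fun c b => A a c * F a b)
    have h2 : ∀ q : Fin (m + 1) → ι,
        (∏ i : Fin (m + 1), A ((Fin.consEquiv fun _ : Fin (m + 2) => ι) (a, q) i.castSucc)
          ((Fin.consEquiv fun _ : Fin (m + 2) => ι) (a, q) i.succ)) *
          F ((Fin.consEquiv fun _ : Fin (m + 2) => ι) (a, q) 0)
            ((Fin.consEquiv fun _ : Fin (m + 2) => ι) (a, q) (Fin.last (m + 1))) =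
        (∏ i : Fin m, A (q i.castSucc) (q i.succ)) * (A a (q 0) * F a (q (Fin.last m))) := by
      intro q
      rw [Fin.prod_univ_succ, ← Fin.succ_last]
      simp only [Fin.consEquiv_apply, Fin.castSucc_zero, Fin.cons_zero, Fin.cons_succ,
        ← Fin.succ_castSucc]
      ring
    simp_rw [h2]
    rw [h, Finset.sum_comm]
    refine Finset.sum_congr rfl fun b _ => ?_
    rw [pow_succ', Matrix.mul_apply, Finset.sum_mul]
    exact Finset.sum_congr rfl fun c _ => by ring

/-- The trace of a matrix power as a sum over closed walks. -/
lemma sum_cycles {ι : Type*} [Fintype ι] [DecidableEq ι] (A : Matrix ι ι ℝ) (m : ℕ) :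
    ∑ p : Fin (m + 1) → ι, ∏ i : Fin (m + 1), A (p i) (p (i + 1)) = (A ^ (m + 1)).trace := by
  have h := sum_paths A m (fun a b => A b a)
  rw [pow_succ, Matrix.trace]
  simp only [Matrix.diag_apply, Matrix.mul_apply]
  rw [← h]
  refine Finset.sum_congr rfl fun p _ => ?_
  rw [Fin.prod_univ_castSucc]
  simp [Fin.coeSucc_eq_succ]

/-- Squaring preserves being nonzero here: if `B = A ^ (2 ^ j)` and `B ^ 2 = 0`, then `Bᵀ B = 0`,
so `B = 0`. -/
lemma pow_ne_zero_of_transpose {ι : Type*} [Fintype ι] [DecidableEq ι] (A : Matrix ι ι ℝ)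
    (σ : ℝ) (hσ : A.transpose = σ • A) (hA : A ≠ 0) (k : ℕ) : A ^ k ≠ 0 := by
  have key : ∀ j : ℕ, A ^ (2 ^ j) ≠ 0 := by
    intro j
    induction j with
    | zero => simpa using hA
    | succ j ih =>
      intro h
      apply ih
      rw [← Matrix.conjTranspose_mul_self_eq_zero, Matrix.conjTranspose_eq_transpose_of_trivial,
        Matrix.transpose_pow, hσ, smul_pow, smul_mul_assoc, ← pow_add, ← two_mul, ← pow_succ', h,
        smul_zero]
  intro h
  exact key k (pow_eq_zero_of_le Nat.lt_two_pow_self.le h)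

/-- A nonzero real matrix with `Aᵀ = σ A` is normal, hence not nilpotent, and `σ ^ k` times the
trace of `A ^ (2 * k)` is the squared Frobenius norm of `A ^ k`. -/
lemma trace_pow_ne_zero {ι : Type*} [Fintype ι] [DecidableEq ι] (A : Matrix ι ι ℝ)
    (σ : ℝ) (hσ : A.transpose = σ • A) (hA : A ≠ 0) (k : ℕ) : (A ^ (2 * k)).trace ≠ 0 := by
  intro h
  apply pow_ne_zero_of_transpose A σ hσ hA k
  rw [← Matrix.trace_conjTranspose_mul_self_eq_zero_iff,
    Matrix.conjTranspose_eq_transpose_of_trivial,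
    Matrix.transpose_pow, hσ, smul_pow, smul_mul_assoc, ← pow_add, ← two_mul, Matrix.trace_smul, h,
    smul_zero]

/-! ### The transfer matrix -/

section Transfer

set_option linter.unusedSectionVars false

variable {V : Type*} [Fintype V] [DecidableEq V]

/-- The squarefree monomial `∏_{v ∈ S} x_v` of a vertex set `S`, encoded as `V → Bool`. -/
noncomputable def setMon (S : V → Bool) : MvPolynomial V ℝ := ∏ v, if S v then X v else 1

/-- The squarefree monomial of the complement of `S`. -/
noncomputable def compMon (S : V → Bool) : MvPolynomial V ℝ := ∏ v, if S v then 1 else X v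

/-- The sign `(-1)^{|V \ S|}`. -/
def setSign (S : V → Bool) : ℝ := ∏ v, if S v then 1 else -1

/-- The exponent `1_{V \ S} + 1_T`. -/
noncomputable def pairExp (S T : V → Bool) : V →₀ ℕ :=
  Finsupp.equivFunOnFinite.symm fun v => (if S v then 0 else 1) + (if T v then 1 else 0)

lemma compMon_mul_setMon (S T : V → Bool) :
    compMon S * setMon T = monomial (pairExp S T) 1 := by
  rw [compMon, setMon, ← Finset.prod_mul_distrib, MvPolynomial.monomial_eq, C_1, one_mul,
    Finsupp.prod_fintype _ _ (by simp)]
  refine Finset.prod_congr rfl fun v _ => ?_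
  simp only [pairExp, Finsupp.equivFunOnFinite_symm_apply_apply]
  cases S v <;> cases T v <;> simp [pow_two]

/-- The generalized graph polynomial of a set `E` of ordered pairs with signs `ε`. -/
noncomputable def genPoly (E : Finset (V × V)) (ε : V × V → ℝ) : MvPolynomial V ℝ :=
  ∏ e ∈ E, (X e.1 + C (ε e) * X e.2)

/-- The matrix with entries the coefficients of `Q` at `h - 1 + 1_S - 1_T`, written without
subtraction. -/
noncomputable def transfer (Q : MvPolynomial V ℝ) (h : V →₀ ℕ) :
    Matrix (V → Bool) (V → Bool) ℝ :=
  fun S T => coeff h (Q * (compMon S * setMon T))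

/-- The exponent obtained by choosing first endpoints on `t` and second endpoints on `E \ t`. -/
noncomputable def choiceExp (E t : Finset (V × V)) : V →₀ ℕ :=
  ∑ e ∈ t, Finsupp.single e.1 1 + ∑ e ∈ E \ t, Finsupp.single e.2 1

lemma genPoly_eq_sum (E : Finset (V × V)) (ε : V × V → ℝ) :
    genPoly E ε = ∑ t ∈ E.powerset, monomial (choiceExp E t) (∏ e ∈ E \ t, ε e) := by
  rw [genPoly, Finset.prod_add]
  refine Finset.sum_congr rfl fun t _ => ?_
  have h1 : ∀ e : V × V, (C (ε e) * X e.2 : MvPolynomial V ℝ) =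
      monomial (Finsupp.single e.2 1) (ε e) := by
    intro e
    rw [X, C_mul_monomial, mul_one]
  simp_rw [h1]
  simp only [X]
  rw [← MvPolynomial.monomial_sum_prod, ← MvPolynomial.monomial_sum_prod,
    monomial_mul]
  simp [choiceExp]

lemma transfer_genPoly (E : Finset (V × V)) (ε : V × V → ℝ) (h : V →₀ ℕ) (S T : V → Bool) :
    transfer (genPoly E ε) h S T =
      ∑ t ∈ E.powerset, if choiceExp E t + pairExp S T = h then ∏ e ∈ E \ t, ε e else 0 := by
  rw [transfer, compMon_mul_setMon, genPoly_eq_sum, Finset.sum_mul, coeff_sum]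
  refine Finset.sum_congr rfl fun t _ => ?_
  rw [monomial_mul, coeff_monomial, mul_one]

lemma choiceExp_compl (E t : Finset (V × V)) (ht : t ⊆ E) :
    choiceExp E t + choiceExp E (E \ t) = choiceExp E E + choiceExp E ∅ := by
  simp only [choiceExp, Finset.sdiff_sdiff_eq_self ht, Finset.sdiff_self, Finset.sdiff_empty,
    Finset.sum_empty, add_zero, zero_add]
  rw [← Finset.sum_sdiff ht (f := fun e => Finsupp.single e.1 1),
    ← Finset.sum_sdiff ht (f := fun e => Finsupp.single e.2 1)]
  abel

lemma sum_choiceExp (E t : Finset (V × V)) (ht : t ⊆ E) : ∑ v, choiceExp E t v = E.card := by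
  simp only [choiceExp, Finsupp.add_apply, Finsupp.finsetSum_apply, Finset.sum_add_distrib]
  rw [Finset.sum_comm, Finset.sum_comm (s := univ) (t := E \ t)]
  simp only [Finsupp.single_apply, Finset.sum_ite_eq, Finset.mem_univ, if_true,
    Finset.sum_const, smul_eq_mul, mul_one]
  rw [add_comm, Finset.card_sdiff_add_card_eq_card ht]

/-- Exchanging the chosen endpoint on every edge multiplies each term by `∏ ε_e`, so the transfer
matrix is symmetric or antisymmetric. -/
lemma transfer_transpose (E : Finset (V × V)) (ε : V × V → ℝ)
    (hε : ∀ e ∈ E, ε e = 1 ∨ ε e = -1) (h : V →₀ ℕ)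
    (hh : ∀ v, choiceExp E E v + choiceExp E ∅ v + 2 = 2 * h v) :
    (transfer (genPoly E ε) h).transpose = (∏ e ∈ E, ε e) • transfer (genPoly E ε) h := by
  ext S T
  rw [Matrix.transpose_apply, Matrix.smul_apply, transfer_genPoly, transfer_genPoly, smul_eq_mul,
    Finset.mul_sum]
  refine Finset.sum_nbij' (fun t => E \ t) (fun t => E \ t) (by simp) (by simp)
    (fun t ht => Finset.sdiff_sdiff_eq_self (Finset.mem_powerset.1 ht))
    (fun t ht => Finset.sdiff_sdiff_eq_self (Finset.mem_powerset.1 ht)) ?_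
  intro t ht
  rw [Finset.mem_powerset] at ht
  have hc := choiceExp_compl E t ht
  have hiff : choiceExp E t + pairExp T S = h ↔ choiceExp E (E \ t) + pairExp S T = h := by
    simp only [Finsupp.ext_iff]
    refine forall_congr' fun v => ?_
    have h1 := DFunLike.congr_fun hc v
    have h2 := hh v
    have h3 : pairExp T S v + pairExp S T v = 2 := by
      simp only [pairExp, Finsupp.equivFunOnFinite_symm_apply_apply]
      cases S v <;> cases T v <;> simp
    simp only [Finsupp.add_apply] at h1 ⊢
    omega
  rw [Finset.sdiff_sdiff_eq_self ht]
  by_cases h1 : choiceExp E t + pairExp T S = h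
  · rw [if_pos h1, if_pos (hiff.1 h1), ← Finset.prod_sdiff ht, mul_assoc, ← Finset.prod_mul_distrib,
      Finset.prod_eq_one (s := t), mul_one]
    intro e he
    rcases hε e (ht he) with h | h <;> rw [h] <;> norm_num
  · rw [if_neg h1, if_neg (fun h2 => h1 (hiff.2 h2)), mul_zero]

lemma setSign_eq (S : V → Bool) : setSign S = (-1) ^ (∑ v, if S v then 0 else 1) := by
  rw [setSign, ← Finset.prod_pow_eq_pow_sum]
  exact Finset.prod_congr rfl fun v _ => by cases S v <;> simp

/-- `Q` is homogeneous, so nonzero entries of the transfer matrix join sets of equal size. -/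
lemma setSign_eq_of_transfer_ne_zero (E : Finset (V × V)) (ε : V × V → ℝ) (h : V →₀ ℕ)
    (hh : ∀ v, choiceExp E E v + choiceExp E ∅ v + 2 = 2 * h v) (S T : V → Bool)
    (hST : transfer (genPoly E ε) h S T ≠ 0) : setSign S = setSign T := by
  rw [transfer_genPoly] at hST
  obtain ⟨t, ht, hne⟩ := Finset.exists_ne_zero_of_sum_ne_zero hST
  rw [Finset.mem_powerset] at ht
  have heq : choiceExp E t + pairExp S T = h := by
    by_contra hcon
    exact hne (if_neg hcon)
  have h1 : ∑ v, (choiceExp E t v + pairExp S T v) = ∑ v, h v :=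
    Finset.sum_congr rfl fun v _ => by rw [← heq]; rfl
  have h2 : ∑ v, (choiceExp E E v + choiceExp E ∅ v + 2) = ∑ v, 2 * h v :=
    Finset.sum_congr rfl fun v _ => hh v
  rw [← Finset.mul_sum] at h2
  simp only [Finset.sum_add_distrib, sum_choiceExp E t ht, sum_choiceExp E E subset_rfl,
    sum_choiceExp E ∅ (Finset.empty_subset _), pairExp,
    Finsupp.equivFunOnFinite_symm_apply_apply] at h1 h2
  have h3 : ∑ v : V, (if T v then 1 else 0) + ∑ v : V, (if T v then 0 else 1) = ∑ v : V, 1 := by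
    rw [← Finset.sum_add_distrib]
    exact Finset.sum_congr rfl fun v _ => by cases T v <;> simp
  have h4 : ∑ v : V, 2 = 2 * ∑ v : V, 1 := by simp [mul_comm]
  rw [setSign_eq, setSign_eq]
  congr 1
  omega

lemma coupling_expand {I : Type*} (i j : I) :
    ∏ v : V, (X (i, v) - X (j, v) : MvPolynomial (I × V) ℝ) =
      ∑ S : V → Bool, C (setSign S) * (rename (fun v => (i, v)) (setMon S) *
        rename (fun v => (j, v)) (compMon S)) := by
  have h1 : ∀ v : V, (X (i, v) - X (j, v) : MvPolynomial (I × V) ℝ) =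
      ∑ b : Bool, if b then X (i, v) else -X (j, v) := by
    intro v
    simp [sub_eq_add_neg]
  simp_rw [h1]
  rw [Fintype.prod_sum]
  refine Finset.sum_congr rfl fun S _ => ?_
  simp only [setSign, setMon, compMon, map_prod]
  rw [← Finset.prod_mul_distrib, ← Finset.prod_mul_distrib]
  exact Finset.prod_congr rfl fun v _ => by cases S v <;> simp

/-- Expanding the coupling factors turns the coefficient into a sum over closed walks of vertex
sets. -/
lemma coeff_eq_sum (Q : MvPolynomial V ℝ) (h : V →₀ ℕ) (m : ℕ) :
    coeff (Finsupp.equivFunOnFinite.symm fun p : Fin (m + 1) × V => h p.2)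
      ((∏ i : Fin (m + 1), rename (fun v => (i, v)) Q) *
        ∏ i : Fin (m + 1), ∏ v : V, (X (i, v) - X (i + 1, v))) =
    ∑ p : Fin (m + 1) → V → Bool,
      (∏ i, setSign (p i)) * ∏ i, transfer Q h (p i) (p (i + 1)) := by
  simp_rw [coupling_expand]
  rw [Fintype.prod_sum, Finset.mul_sum, coeff_sum]
  refine Finset.sum_congr rfl fun p _ => ?_
  -- The factor `compMon (p i)` lives in layer `i + 1`; regroup all factors by layer.
  have h1 : (∏ i : Fin (m + 1), rename (fun v => (i, v)) Q) *
      ∏ i : Fin (m + 1), (C (setSign (p i)) * (rename (fun v => (i, v)) (setMon (p i)) *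
        rename (fun v => (i + 1, v)) (compMon (p i)))) =
      C (∏ i, setSign (p i)) * ∏ i : Fin (m + 1),
        rename (fun v => (i, v)) (Q * (compMon (p (i - 1)) * setMon (p i))) := by
    have h2 : ∏ i : Fin (m + 1), rename (fun v => (i + 1, v)) (compMon (p i)) =
        ∏ i : Fin (m + 1), rename (fun v => (i, v)) (compMon (p (i - 1))) := by
      rw [← Equiv.prod_comp (Equiv.addRight (1 : Fin (m + 1)))
        (fun i => rename (fun v => (i, v)) (compMon (p (i - 1))))]
      simp
    simp only [map_mul, map_prod, Finset.prod_mul_distrib]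
    rw [h2]
    ring
  rw [h1, coeff_C_mul, coeff_prod_rename]
  congr 1
  rw [← Equiv.prod_comp (Equiv.addRight (1 : Fin (m + 1)))]
  refine Finset.prod_congr rfl fun i _ => ?_
  simp only [Equiv.coe_addRight, add_sub_cancel_right, transfer,
    Finsupp.equivFunOnFinite_symm_apply_apply]
  congr 1
  ext v
  rfl

/-- A function on a cycle that is constant along each step is constant. -/
lemma const_of_step {α : Type*} {m : ℕ} (f : Fin (m + 1) → α) (hf : ∀ i, f i = f (i + 1))
    (i : Fin (m + 1)) : f i = f 0 := by
  induction i using Fin.induction with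
  | zero => rfl
  | succ i ih => rw [← ih, hf i.castSucc, Fin.coeSucc_eq_succ]

lemma choiceExp_degree {G : SimpleGraph V} [DecidableRel G.Adj] (D : GraphOrientation G) (v : V) :
    choiceExp D.edges D.edges v + choiceExp D.edges ∅ v = G.degree v := by
  simp only [choiceExp, Finset.sdiff_self, Finset.sdiff_empty, Finset.sum_empty, add_zero,
    zero_add, Finsupp.finsetSum_apply, Finsupp.single_apply, ← Finset.card_filter]
  rw [← SimpleGraph.card_neighborFinset_eq_degree]
  have h1 : (D.edges.filter fun e => e.1 = v).card =
      ((G.neighborFinset v).filter fun w => (v, w) ∈ D.edges).card := by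
    refine Finset.card_nbij' (fun e => e.2) (fun w => (v, w)) ?_ ?_ ?_ ?_
    · rintro ⟨a, b⟩ h
      simp only [Finset.coe_filter, Set.mem_ofPred_eq] at h
      obtain ⟨h, rfl⟩ := h
      simpa [h] using D.adj_of_mem _ h
    · intro w h
      simp_all
    · rintro ⟨a, b⟩ h
      simp_all
    · intro w h
      rfl
  have h2 : (D.edges.filter fun e => e.2 = v).card =
      ((G.neighborFinset v).filter fun w => ¬ (v, w) ∈ D.edges).card := by
    refine Finset.card_nbij' (fun e => e.1) (fun w => (w, v)) ?_ ?_ ?_ ?_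
    · rintro ⟨a, b⟩ h
      simp only [Finset.coe_filter, Set.mem_ofPred_eq] at h
      obtain ⟨h, rfl⟩ := h
      have hadj := D.adj_of_mem _ h
      simpa [hadj.symm] using (D.mem_iff_not_swap_mem _ _ hadj).1 h
    · intro w h
      simp only [Finset.coe_filter, SimpleGraph.mem_neighborFinset, Set.mem_ofPred_eq] at h
      simpa using (D.mem_iff_not_swap_mem _ _ h.1.symm).2 h.2
    · rintro ⟨a, b⟩ h
      simp_all
    · intro w h
      rfl
  rw [h1, h2, Finset.card_filter_add_card_filter_not]

end Transfer

end CentralCoeff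

open CentralCoeff

/-- Let `G` have all degrees even, let `ε` assign a sign `±1` to
each (oriented) edge, and let `Q = ∏_{(i,j) ∈ E} (x_i + ε_e x_j)` be the resulting
generalized graph polynomial. If `Q` has a nonzero almost central coefficient, then
for every `k ≥ 1` the polynomial `∏_{i=1}^{2k} Q(x^i) · ∏_{i=1}^{2k} ∏_j (x^i_j - x^{i+1}_j)`
(with `x^{2k+1} ≡ x^1`) has a nonzero central coefficient: the coefficient of
`∏_{i,j} (x^i_j)^{deg(v_j)/2 + 1}` is nonzero. -/
theorem stmt13 {V : Type*} [Fintype V] [DecidableEq V] (G : SimpleGraph V)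
    [DecidableRel G.Adj]
    (hEven : ∀ v, Even (G.degree v))
    (D : GraphOrientation G) (ε : V × V → ℝ)
    (hε : ∀ e ∈ D.edges, ε e = 1 ∨ ε e = -1)
    (ξ : V →₀ ℕ)
    (hne : MvPolynomial.coeff ξ
      (∏ e ∈ D.edges, (X e.1 + C (ε e) * X e.2) : MvPolynomial V ℝ) ≠ 0)
    (hac : ∀ v, |2 * (ξ v : ℤ) - (G.degree v : ℤ)| ≤ 2)
    (k : ℕ) (hk : 1 ≤ k) [NeZero (2 * k)] :
    MvPolynomial.coeff
      (Finsupp.equivFunOnFinite.symm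
        fun p : Fin (2 * k) × V => G.degree p.2 / 2 + 1)
      ((∏ i : Fin (2 * k),
          (∏ e ∈ D.edges, (X e.1 + C (ε e) * X e.2) : MvPolynomial V ℝ).rename
            fun v => (i, v)) *
        ∏ i : Fin (2 * k), ∏ v : V, (X (i, v) - X (i + 1, v))) ≠ 0 := by
  set h : V →₀ ℕ := Finsupp.equivFunOnFinite.symm fun v => G.degree v / 2 + 1 with hdef
  have hval : ∀ v, h v = G.degree v / 2 + 1 := fun v => rfl
  have hh : ∀ v, choiceExp D.edges D.edges v + choiceExp D.edges ∅ v + 2 = 2 * h v := by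
    intro v
    obtain ⟨r, hr⟩ := hEven v
    rw [choiceExp_degree, hval]
    omega
  set A := transfer (genPoly D.edges ε) h with hA
  have hA0 : A ≠ 0 := by
    -- `ξ - deg / 2 = 1_S - 1_T` for these `S` and `T`.
    let S : V → Bool := fun v => decide (G.degree v / 2 < ξ v)
    let T : V → Bool := fun v => decide (ξ v < G.degree v / 2)
    have hsum : ξ + pairExp S T = h := by
      ext v
      have h1 := abs_le.1 (hac v)
      obtain ⟨r, hr⟩ := hEven v
      simp only [Finsupp.add_apply, hval, pairExp, Finsupp.equivFunOnFinite_symm_apply_apply, S, T,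
        decide_eq_true_eq]
      split_ifs <;> omega
    intro hzero
    apply hne
    have h2 : A S T = 0 := by rw [hzero]; rfl
    rw [hA, transfer, compMon_mul_setMon, ← hsum, coeff_mul_monomial, mul_one] at h2
    exact h2
  have htr := trace_pow_ne_zero A _ (transfer_transpose D.edges ε hε h hh) hA0 k
  have heven : Even (2 * k) := even_two_mul k
  have hpos : 2 * k ≠ 0 := by omega
  generalize 2 * k = N at *
  obtain ⟨m, rfl⟩ := Nat.exists_eq_succ_of_ne_zero hpos
  refine ne_of_eq_of_ne ((coeff_eq_sum (genPoly D.edges ε) h m).trans ?_) htr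
  rw [Nat.succ_eq_add_one, ← sum_cycles]
  refine Finset.sum_congr rfl fun p _ => ?_
  by_cases hp : ∀ i, A (p i) (p (i + 1)) ≠ 0
  · -- All sets on a contributing closed walk have one sign, which occurs an even number of times.
    have hs : ∀ i, setSign (p i) = setSign (p 0) :=
      const_of_step (fun i => setSign (p i)) fun i =>
        setSign_eq_of_transfer_ne_zero D.edges ε h hh _ _ (hp i)
    have h1 : ∏ i, setSign (p i) = 1 := by
      simp_rw [hs]
      rw [Finset.prod_const, Finset.card_univ, Fintype.card_fin, setSign_eq, ← pow_mul, mul_comm,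
        pow_mul, heven.neg_one_pow, one_pow]
    rw [h1, one_mul]
  · push Not at hp
    obtain ⟨i, hi⟩ := hp
    have hz : ∏ i, A (p i) (p (i + 1)) = 0 := Finset.prod_eq_zero (Finset.mem_univ i) hi
    rw [hz, mul_zero]
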